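/- arXiv:1709.03219 — 4 statements merged into one kernel-verified Lean document; each statement's English description precedes it below -/
import Mathlib

section
/- For every m > 0 and every rapidity χ ∈ ℝ, the Lorentz boost in the third coordinate direction, acting on the mass shell as the map T_χ : ℝ³ → ℝ³ defined by T_χ(k₁, k₂, k₃) = (k₁, k₂, k₃·cosh χ + √(‖k‖² + m²)·sinh χ), is measure-preserving for the measure ω_m on ℝ³ given by Lebesgue measure with density k ↦ 1/√(‖k‖² + m²). That is, the pushforward of ω_m under T_χ equals ω_m. -/
open MeasureTheory Real

/-- The Lorentz boost of rapidity `χ` along the third axis, acting on the mass shell of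
mass `m` parametrized by the spatial momentum `k ∈ ℝ³`:
`T_χ(k₁, k₂, k₃) = (k₁, k₂, k₃·cosh χ + √(‖k‖² + m²)·sinh χ)`. -/
noncomputable def boostMap (m χ : ℝ) (k : EuclideanSpace ℝ (Fin 3)) :
    EuclideanSpace ℝ (Fin 3) :=
  WithLp.toLp 2 fun i => if i = 2 then k 2 * Real.cosh χ + Real.sqrt (‖k‖ ^ 2 + m ^ 2) * Real.sinh χ
           else k i

/-- The invariant mass-shell measure `ω_m`: Lebesgue measure on `ℝ³` with density
`k ↦ 1/√(‖k‖² + m²)`. -/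
noncomputable def massShellMeasure (m : ℝ) : Measure (EuclideanSpace ℝ (Fin 3)) :=
  (volume : Measure (EuclideanSpace ℝ (Fin 3))).withDensity
    (fun k => ENNReal.ofReal (1 / Real.sqrt (‖k‖ ^ 2 + m ^ 2)))

/-!
Write `E(k) = √(‖k‖² + m²)` and `p(k) = ⟪e, k⟫` for a unit vector `e`. The boost along `e`
translates `k` in the direction `e` so that `(E, p)` undergoes the hyperbolic rotation of angle `χ`.
Its derivative is therefore the identity plus a rank-one map, and its determinant is
`cosh χ + sinh χ * p(k) / E(k) = E(T_χ k) / E(k)`, which cancels the change of the density `1 / E`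
along `T_χ`. Only the tip `E(k) = 0` of the light cone, present for `m = 0`, escapes the change of
variables, and it is a null set.
-/

open scoped ENNReal InnerProductSpace

theorem exp_neg_abs_mul_le_cosh_mul_add_sinh_mul {a b : ℝ} (hb : |b| ≤ a) (χ : ℝ) :
    exp (-|χ|) * a ≤ cosh χ * a + sinh χ * b := by
  calc exp (-|χ|) * a = cosh χ * a - |sinh χ| * a := by
        rw [← cosh_sub_sinh, cosh_abs, ← abs_sinh, sub_mul]
    _ ≤ cosh χ * a - |sinh χ * b| := by rw [abs_mul]; gcongr
    _ ≤ cosh χ * a + sinh χ * b := by linarith [neg_abs_le (sinh χ * b)]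

section ChangeOfVariables

variable {E : Type*} [NormedAddCommGroup E] [NormedSpace ℝ E] [FiniteDimensional ℝ E]

theorem det_id_add_smulRight (φ : E →L[ℝ] ℝ) (v : E) :
    (ContinuousLinearMap.id ℝ E + φ.smulRight v).det = 1 + φ v :=
  LinearMap.transvection.det (φ : E →ₗ[ℝ] ℝ) v

variable [MeasurableSpace E] [BorelSpace E] {μ : Measure E} [μ.IsAddHaarMeasure]
  {s : Set E} {f : E → E} {f' : E → E →L[ℝ] E} {ρ : E → ℝ≥0∞}

theorem map_withDensity_abs_det_fderiv_mul_comp (hs : MeasurableSet s) (hf : Measurable f)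
    (hf' : ∀ x ∈ s, HasFDerivWithinAt f (f' x) s x) (hinj : Set.InjOn f s) :
    ((μ.restrict s).withDensity fun x ↦ ENNReal.ofReal |(f' x).det| * ρ (f x)).map f =
      (μ.restrict (f '' s)).withDensity ρ := by
  ext t ht
  have himage : f '' (f ⁻¹' t ∩ s) = t ∩ f '' s := Set.image_preimage_inter f s t
  rw [Measure.map_apply hf ht, withDensity_apply _ (hf ht), withDensity_apply _ ht,
    Measure.restrict_restrict (hf ht), Measure.restrict_restrict ht, ← himage]
  exact (lintegral_image_eq_lintegral_abs_det_fderiv_mul μ ((hf ht).inter hs)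
    (fun x hx ↦ (hf' x hx.2).mono Set.inter_subset_right)
    (hinj.mono Set.inter_subset_right) ρ).symm

theorem measurePreserving_withDensity_of_abs_det_fderiv_mul_comp_eq (hs : MeasurableSet s)
    (hs_ae : ∀ᵐ x ∂μ, x ∈ s) (hf : Measurable f)
    (hf' : ∀ x ∈ s, HasFDerivWithinAt f (f' x) s x) (hbij : Set.BijOn f s s)
    (hρ : ∀ x ∈ s, ENNReal.ofReal |(f' x).det| * ρ (f x) = ρ x) :
    MeasurePreserving f (μ.withDensity ρ) (μ.withDensity ρ) := by
  refine ⟨hf, ?_⟩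
  have hmap := map_withDensity_abs_det_fderiv_mul_comp (μ := μ) (ρ := ρ) hs hf hf' hbij.injOn
  rwa [hbij.image_eq, Measure.restrict_eq_self_of_ae_mem hs_ae,
    withDensity_congr_ae (hs_ae.mono hρ)] at hmap

end ChangeOfVariables

section ShellEnergy

variable {E : Type*} [NormedAddCommGroup E]

/-- The energy `k⁰ = √(‖k‖² + m²)` of the point of the mass shell of mass `m` with spatial
momentum `k`, for momenta in an arbitrary normed space. -/
noncomputable def shellEnergy (m : ℝ) (k : E) : ℝ :=
  √(‖k‖ ^ 2 + m ^ 2)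

/-- The density `1 / k⁰` of the invariant mass-shell measure. At energy zero, which occurs only for
`k = 0` and `m = 0`, it takes the value `0`. -/
noncomputable def shellDensity (m : ℝ) (k : E) : ℝ≥0∞ :=
  ENNReal.ofReal (1 / shellEnergy m k)

theorem shellEnergy_nonneg (m : ℝ) (k : E) : 0 ≤ shellEnergy m k :=
  sqrt_nonneg _

theorem shellEnergy_sq (m : ℝ) (k : E) : shellEnergy m k ^ 2 = ‖k‖ ^ 2 + m ^ 2 :=
  sq_sqrt (by positivity)

theorem norm_le_shellEnergy (m : ℝ) (k : E) : ‖k‖ ≤ shellEnergy m k :=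
  le_sqrt_of_sq_le (le_add_of_nonneg_right (sq_nonneg m))

@[fun_prop]
theorem continuous_shellEnergy (m : ℝ) : Continuous (shellEnergy m : E → ℝ) := by
  unfold shellEnergy
  fun_prop

theorem ae_shellEnergy_pos [MeasurableSpace E] (μ : Measure E) [NullSingletonClass μ] (m : ℝ) :
    ∀ᵐ k ∂μ, 0 < shellEnergy m k := by
  filter_upwards [Measure.ae_ne μ 0] with k hk
  exact (norm_pos_iff.mpr hk).trans_le (norm_le_shellEnergy m k)

end ShellEnergy

section Boost

variable {E : Type*} [NormedAddCommGroup E] [InnerProductSpace ℝ E]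

/-- The Lorentz boost of rapidity `χ` in the direction `e`, acting on spatial momenta of the mass
shell of mass `m`. It is meant for unit vectors `e`, and it is written as a translation along `e`
so that its derivative is visibly a rank-one perturbation of the identity. -/
noncomputable def boostAlong (e : E) (m χ : ℝ) (k : E) : E :=
  k + ((cosh χ - 1) * ⟪e, k⟫_ℝ + sinh χ * shellEnergy m k) • e

theorem continuous_boostAlong (e : E) (m χ : ℝ) : Continuous (boostAlong e m χ) := by
  unfold boostAlong
  fun_prop

theorem boostAlong_zero_rapidity (e : E) (m : ℝ) (k : E) : boostAlong e m 0 k = k := by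
  simp [boostAlong]

section UnitVector

variable {e : E}

theorem inner_boostAlong (he : ‖e‖ = 1) (m χ : ℝ) (k : E) :
    ⟪e, boostAlong e m χ k⟫_ℝ = cosh χ * ⟪e, k⟫_ℝ + sinh χ * shellEnergy m k := by
  rw [boostAlong, inner_add_right, inner_smul_right, real_inner_self_eq_norm_sq, he]
  ring

theorem exp_neg_abs_mul_shellEnergy_le (he : ‖e‖ = 1) (m χ : ℝ) (k : E) :
    exp (-|χ|) * shellEnergy m k ≤ cosh χ * shellEnergy m k + sinh χ * ⟪e, k⟫_ℝ := by
  have hinner : |⟪e, k⟫_ℝ| ≤ ‖k‖ := by simpa [he] using abs_real_inner_le_norm e k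
  exact exp_neg_abs_mul_le_cosh_mul_add_sinh_mul (hinner.trans (norm_le_shellEnergy m k)) χ

theorem shellEnergy_boostAlong (he : ‖e‖ = 1) (m χ : ℝ) (k : E) :
    shellEnergy m (boostAlong e m χ k) = cosh χ * shellEnergy m k + sinh χ * ⟪e, k⟫_ℝ := by
  have hnonneg : 0 ≤ cosh χ * shellEnergy m k + sinh χ * ⟪e, k⟫_ℝ :=
    (mul_nonneg (exp_pos _).le (shellEnergy_nonneg m k)).trans
      (exp_neg_abs_mul_shellEnergy_le he m χ k)
  rw [← sq_eq_sq₀ (shellEnergy_nonneg m _) hnonneg, shellEnergy_sq, boostAlong,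
    norm_add_sq_real, inner_smul_right, real_inner_comm e k, norm_smul, he, mul_one, norm_eq_abs,
    sq_abs]
  linear_combination (⟪e, k⟫_ℝ ^ 2 - shellEnergy m k ^ 2) * cosh_sq χ - shellEnergy_sq m k

theorem shellEnergy_boostAlong_pos (he : ‖e‖ = 1) {m : ℝ} (χ : ℝ) {k : E}
    (hk : 0 < shellEnergy m k) : 0 < shellEnergy m (boostAlong e m χ k) := by
  rw [shellEnergy_boostAlong he]
  exact (mul_pos (exp_pos _) hk).trans_le (exp_neg_abs_mul_shellEnergy_le he m χ k)

theorem boostAlong_boostAlong (he : ‖e‖ = 1) (m χ ψ : ℝ) (k : E) :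
    boostAlong e m χ (boostAlong e m ψ k) = boostAlong e m (χ + ψ) k := by
  rw [boostAlong, inner_boostAlong he, shellEnergy_boostAlong he, boostAlong, boostAlong,
    add_assoc, ← add_smul, cosh_add, sinh_add]
  congr 2
  ring

theorem boostAlong_neg_boostAlong (he : ‖e‖ = 1) (m χ : ℝ) (k : E) :
    boostAlong e m (-χ) (boostAlong e m χ k) = k := by
  rw [boostAlong_boostAlong he, neg_add_cancel, boostAlong_zero_rapidity]

theorem bijOn_boostAlong_shellEnergy_pos (he : ‖e‖ = 1) (m χ : ℝ) :
    Set.BijOn (boostAlong e m χ) {k | 0 < shellEnergy m k} {k | 0 < shellEnergy m k} := by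
  have hmaps (ψ : ℝ) :
      Set.MapsTo (boostAlong e m ψ) {k | 0 < shellEnergy m k} {k | 0 < shellEnergy m k} :=
    fun _ hk ↦ shellEnergy_boostAlong_pos he ψ hk
  have hinv : Set.InvOn (boostAlong e m (-χ)) (boostAlong e m χ)
      {k | 0 < shellEnergy m k} {k | 0 < shellEnergy m k} :=
    ⟨fun k _ ↦ boostAlong_neg_boostAlong he m χ k,
      fun k _ ↦ by simpa using boostAlong_neg_boostAlong he m (-χ) k⟩
  exact hinv.bijOn (hmaps χ) (hmaps (-χ))

end UnitVector

theorem hasFDerivAt_shellEnergy {m : ℝ} {k : E} (hk : 0 < shellEnergy m k) :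
    HasFDerivAt (shellEnergy m) ((1 / shellEnergy m k) • innerSL ℝ k) k := by
  have hsq : HasFDerivAt (fun x : E ↦ ‖x‖ ^ 2 + m ^ 2) (2 • innerSL ℝ k) k :=
    (hasStrictFDerivAt_norm_sq k).hasFDerivAt.add_const (m ^ 2)
  refine (hsq.sqrt (sqrt_pos.mp hk).ne').congr_fderiv ?_
  rw [← Nat.cast_smul_eq_nsmul ℝ, smul_smul]
  congr 1
  rw [shellEnergy]
  field_simp
  norm_num

theorem hasFDerivAt_boostAlong (e : E) {m : ℝ} (χ : ℝ) {k : E} (hk : 0 < shellEnergy m k) :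
    HasFDerivAt (boostAlong e m χ)
      (.id ℝ E +
        ((cosh χ - 1) • innerSL ℝ e + (sinh χ / shellEnergy m k) • innerSL ℝ k).smulRight e) k := by
  have hinner : HasFDerivAt (fun x ↦ ⟪e, x⟫_ℝ) (innerSL ℝ e) k := (innerSL ℝ e).hasFDerivAt
  have hshift := (hinner.const_mul (cosh χ - 1)).add
    ((hasFDerivAt_shellEnergy hk).const_mul (sinh χ))
  rw [smul_smul, mul_one_div] at hshift
  exact (hasFDerivAt_id k).add (hshift.smul_const e)

theorem det_fderiv_boostAlong [FiniteDimensional ℝ E] {e : E} (he : ‖e‖ = 1) {m : ℝ} (χ : ℝ)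
    {k : E} (hk : 0 < shellEnergy m k) :
    (fderiv ℝ (boostAlong e m χ) k).det =
      shellEnergy m (boostAlong e m χ k) / shellEnergy m k := by
  rw [(hasFDerivAt_boostAlong e χ hk).fderiv, det_id_add_smulRight, shellEnergy_boostAlong he]
  simp only [add_apply, smul_apply, innerSL_apply_apply, smul_eq_mul, real_inner_self_eq_norm_sq,
    he, real_inner_comm e k]
  field_simp
  ring

theorem abs_det_fderiv_boostAlong_mul_shellDensity [FiniteDimensional ℝ E] {e : E} (he : ‖e‖ = 1)
    {m : ℝ} (χ : ℝ) {k : E} (hk : 0 < shellEnergy m k) :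
    ENNReal.ofReal |(fderiv ℝ (boostAlong e m χ) k).det| * shellDensity m (boostAlong e m χ k) =
      shellDensity m k := by
  have hboost := shellEnergy_boostAlong_pos he χ hk
  rw [det_fderiv_boostAlong he χ hk, abs_of_pos (div_pos hboost hk), shellDensity, shellDensity,
    ← ENNReal.ofReal_mul (div_pos hboost hk).le]
  congr 1
  field_simp

theorem boost_measurePreserving_general [FiniteDimensional ℝ E] [MeasurableSpace E] [BorelSpace E]
    (μ : Measure E) [μ.IsAddHaarMeasure] {e : E} (he : ‖e‖ = 1) (m χ : ℝ) :
    MeasurePreserving (boostAlong e m χ) (μ.withDensity (shellDensity m))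
      (μ.withDensity (shellDensity m)) := by
  have : Nontrivial E := ⟨e, 0, norm_ne_zero_iff.mp (he ▸ one_ne_zero)⟩
  have hmeas : MeasurableSet {k : E | 0 < shellEnergy m k} :=
    measurableSet_lt measurable_const (continuous_shellEnergy m).measurable
  exact measurePreserving_withDensity_of_abs_det_fderiv_mul_comp_eq hmeas
    (ae_shellEnergy_pos μ m) (continuous_boostAlong e m χ).measurable
    (fun k hk ↦
      (hasFDerivAt_boostAlong e χ hk).differentiableAt.hasFDerivAt.hasFDerivWithinAt)
    (bijOn_boostAlong_shellEnergy_pos he m χ)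
    (fun k hk ↦ abs_det_fderiv_boostAlong_mul_shellDensity he χ hk)

end Boost

theorem boostMap_eq_boostAlong (m χ : ℝ) :
    boostMap m χ = boostAlong (EuclideanSpace.single 2 1) m χ := by
  ext k i
  by_cases hi : i = 2
  · subst hi
    simp only [boostMap, boostAlong, shellEnergy, if_true, PiLp.add_apply, PiLp.smul_apply,
      PiLp.single_apply, EuclideanSpace.inner_single_left, map_one, smul_eq_mul]
    ring
  · simp [boostMap, boostAlong, hi]

/-- For every `m > 0` and every rapidity `χ`, the Lorentz boost along the third axis is
measure-preserving for the invariant mass-shell measure `ω_m`: the pushforward of `ω_m`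
under `T_χ` equals `ω_m`. -/
theorem boost_measurePreserving (m : ℝ) (hm : 0 < m) (χ : ℝ) :
    Measure.map (boostMap m χ) (massShellMeasure m) = massShellMeasure m := by
  rw [boostMap_eq_boostAlong]
  exact (boost_measurePreserving_general volume (by simp) m χ).map_eq
end

section
/- Let m > 0 and let μ be a finite Borel measure on ℝ³ that is invariant under the boost maps T_χ for every χ ∈ ℝ, i.e., the pushforward of μ under T_χ equals μ for all χ. Then μ = 0. In particular, there is no probability measure on the mass shell of mass m that is invariant under all Lorentz boosts along the third axis. -/
open MeasureTheory Real

/-!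
Along the orbit of any point under a fixed non-trivial boost, the momentum component `k₃` is
strictly monotone, because `|k₃| < k⁰` and `cosh χ - 1 < |sinh χ|`. Hence no point is recurrent,
whereas by Poincaré's recurrence theorem almost every point is recurrent for a finite invariant
measure.
-/

theorem eq_zero_of_conservative_of_forall_lt_comp {α β : Type*} [TopologicalSpace α]
    [SecondCountableTopology α] [MeasurableSpace α] [OpensMeasurableSpace α]
    [TopologicalSpace β] [LinearOrder β] [ClosedIciTopology β]
    {μ : Measure α} {T : α → α} {f : α → β} (hT : Conservative T μ) (hf : Continuous f)
    (hlt : ∀ x, f x < f (T x)) : μ = 0 := by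
  rw [← ae_eq_bot, ← Filter.eventually_false_iff_eq_bot]
  filter_upwards [hT.ae_frequently_mem_of_mem_nhds] with x hrecurrent
  have hmono : StrictMono fun n : ℕ => f (T^[n] x) := strictMono_nat_of_lt_succ fun n => by
    simpa only [Function.iterate_succ_apply'] using hlt (T^[n] x)
  have hnhds : {y | f y < f (T x)} ∈ nhds x := hf.continuousAt (Iio_mem_nhds (hlt x))
  obtain ⟨n, hreturn, hn⟩ :=
    ((hrecurrent _ hnhds).and_eventually (Filter.eventually_ge_atTop 1)).exists
  exact hreturn.not_ge (hmono.monotone hn)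

theorem lt_mul_cosh_add_mul_sinh {a E χ : ℝ} (ha : |a| < E) (hχ : 0 < χ) :
    a < a * cosh χ + E * sinh χ := by
  have hsinh : 0 < sinh χ := sinh_pos_iff.2 hχ
  have hcosh : 0 ≤ cosh χ - 1 := sub_nonneg.2 (one_le_cosh χ)
  have hcosh_lt : cosh χ - 1 < sinh χ := by
    linarith [cosh_sub_sinh χ, exp_lt_one_iff.2 (neg_lt_zero.2 hχ)]
  have hgain : -a * (cosh χ - 1) < E * sinh χ :=
    calc -a * (cosh χ - 1) ≤ |a| * (cosh χ - 1) := by gcongr; exact neg_le_abs a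
      _ ≤ |a| * sinh χ := by gcongr
      _ < E * sinh χ := mul_lt_mul_of_pos_right ha hsinh
  linarith

theorem abs_apply_lt_sqrt_norm_sq_add_sq {ι : Type*} [Fintype ι] {m : ℝ} (hm : m ≠ 0)
    (k : EuclideanSpace ℝ ι) (i : ι) : |k i| < √(‖k‖ ^ 2 + m ^ 2) :=
  (PiLp.norm_apply_le k i).trans_lt <|
    lt_sqrt_of_sq_lt (lt_add_of_pos_right _ (sq_pos_of_ne_zero hm))

theorem continuous_boostMap (m χ : ℝ) : Continuous (boostMap m χ) := by
  refine (PiLp.continuous_toLp 2 _).comp (continuous_pi fun i => ?_)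
  split_ifs <;> fun_prop

theorem boostMap_apply_two (m χ : ℝ) (k : EuclideanSpace ℝ (Fin 3)) :
    boostMap m χ k 2 = k 2 * cosh χ + √(‖k‖ ^ 2 + m ^ 2) * sinh χ := by
  simp [boostMap]

theorem lt_boostMap_apply_two {m χ : ℝ} (hm : m ≠ 0) (hχ : 0 < χ)
    (k : EuclideanSpace ℝ (Fin 3)) : k 2 < boostMap m χ k 2 := by
  rw [boostMap_apply_two]
  exact lt_mul_cosh_add_mul_sinh (abs_apply_lt_sqrt_norm_sq_add_sq hm k 2) hχ

theorem boostMap_apply_two_lt {m χ : ℝ} (hm : m ≠ 0) (hχ : χ < 0)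
    (k : EuclideanSpace ℝ (Fin 3)) : boostMap m χ k 2 < k 2 := by
  have habs : |-k 2| < √(‖k‖ ^ 2 + m ^ 2) := by
    simpa only [abs_neg] using abs_apply_lt_sqrt_norm_sq_add_sq hm k 2
  have hreflected := lt_mul_cosh_add_mul_sinh habs (neg_pos.2 hχ)
  rw [cosh_neg, sinh_neg] at hreflected
  rw [boostMap_apply_two]
  linarith

theorem finite_boost_invariant_measure_eq_zero_general {m χ : ℝ} (hm : m ≠ 0) (hχ : χ ≠ 0)
    {μ : Measure (EuclideanSpace ℝ (Fin 3))} (hμ : Conservative (boostMap m χ) μ) : μ = 0 := by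
  rcases hχ.lt_or_gt with hneg | hpos
  · exact eq_zero_of_conservative_of_forall_lt_comp (f := fun k => -k 2) hμ (by fun_prop)
      fun k => neg_lt_neg (boostMap_apply_two_lt hm hneg k)
  · exact eq_zero_of_conservative_of_forall_lt_comp (f := fun k => k 2) hμ (by fun_prop)
      (lt_boostMap_apply_two hm hpos)

/-- For `m > 0`, any finite Borel measure on `ℝ³` that is invariant under the boost maps
`T_χ` for every rapidity `χ` must be the zero measure.  In particular there is no
probability measure on the mass shell of mass `m` invariant under all Lorentz boosts
along the third axis. -/
theorem finite_boost_invariant_measure_eq_zero (m : ℝ) (hm : 0 < m)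
    (μ : Measure (EuclideanSpace ℝ (Fin 3))) [IsFiniteMeasure μ]
    (hinv : ∀ χ : ℝ, Measure.map (boostMap m χ) μ = μ) :
    μ = 0 := by
  have hpres : MeasurePreserving (boostMap m 1) μ μ :=
    ⟨(continuous_boostMap m 1).measurable, hinv 1⟩
  exact finite_boost_invariant_measure_eq_zero_general hm.ne' one_ne_zero hpres.conservative
end

section
/- Let H be a complex Hilbert space, (Γ, μ) a measure space, f : Γ → H an almost everywhere strongly measurable function with γ ↦ ‖f γ‖² integrable and ∫ ‖f γ‖² dμ(γ) = 1, and let ψ ∈ H be a unit vector such that ∫ |⟪ψ, f γ⟫|² dμ(γ) = 1. Then for μ-almost every γ there exists c ∈ ℂ such that f γ = c • ψ. (Purity of the ensemble density operator ρ̄ = ∫ |f γ⟩⟨f γ| dμ forces almost all the vectors f γ to lie in a single ray.) -/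
open MeasureTheory
open scoped InnerProductSpace

section CauchySchwarz

theorem norm_inner_sq_le_norm_sq_mul_norm_sq {𝕜 E : Type*} [RCLike 𝕜]
    [SeminormedAddCommGroup E] [InnerProductSpace 𝕜 E] (x y : E) :
    ‖⟪x, y⟫_𝕜‖ ^ 2 ≤ ‖x‖ ^ 2 * ‖y‖ ^ 2 := by
  rw [← mul_pow]
  gcongr
  exact norm_inner_le_norm x y

variable {𝕜 E : Type*} [RCLike 𝕜] [NormedAddCommGroup E] [InnerProductSpace 𝕜 E]

theorem norm_inner_sq_eq_norm_sq_mul_norm_sq_iff_mem_span_singleton {x : E} (hx : x ≠ 0) (y : E) :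
    ‖⟪x, y⟫_𝕜‖ ^ 2 = ‖x‖ ^ 2 * ‖y‖ ^ 2 ↔ y ∈ Submodule.span 𝕜 {x} :=
  calc
    ‖⟪x, y⟫_𝕜‖ ^ 2 = ‖x‖ ^ 2 * ‖y‖ ^ 2 ↔ ‖⟪x, y⟫_𝕜‖ = ‖x‖ * ‖y‖ := by
      rw [← mul_pow, pow_left_inj₀ (by positivity) (by positivity) two_ne_zero]
    _ ↔ x = 0 ∨ y ∈ Submodule.span 𝕜 {x} := (norm_inner_eq_norm_tfae 𝕜 x y).out 0 3
    _ ↔ y ∈ Submodule.span 𝕜 {x} := or_iff_right hx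

variable {Γ : Type*} [MeasurableSpace Γ] {μ : Measure Γ} {f : Γ → E} {ψ : E}

theorem integral_norm_inner_sq_eq_iff_ae_mem_span_singleton (hψ : ψ ≠ 0)
    (hf : Integrable (fun γ => ‖f γ‖ ^ 2) μ)
    (hψf : Integrable (fun γ => ‖⟪ψ, f γ⟫_𝕜‖ ^ 2) μ) :
    ∫ γ, ‖⟪ψ, f γ⟫_𝕜‖ ^ 2 ∂μ = ‖ψ‖ ^ 2 * ∫ γ, ‖f γ‖ ^ 2 ∂μ ↔
      ∀ᵐ γ ∂μ, f γ ∈ Submodule.span 𝕜 {ψ} := by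
  have cauchy_schwarz : ∀ᵐ γ ∂μ, ‖⟪ψ, f γ⟫_𝕜‖ ^ 2 ≤ ‖ψ‖ ^ 2 * ‖f γ‖ ^ 2 :=
    .of_forall fun γ => norm_inner_sq_le_norm_sq_mul_norm_sq ψ (f γ)
  rw [← integral_const_mul, integral_eq_iff_of_ae_le hψf (hf.const_mul _) cauchy_schwarz]
  exact Filter.eventually_congr <| .of_forall fun γ =>
    norm_inner_sq_eq_norm_sq_mul_norm_sq_iff_mem_span_singleton hψ (f γ)

theorem pure_ensemble_vectors_in_ray_general
    (hf_norm : ∫ γ, ‖f γ‖ ^ 2 ∂μ = 1) (hψ : ‖ψ‖ = 1)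
    (hpure : ∫ γ, ‖⟪ψ, f γ⟫_𝕜‖ ^ 2 ∂μ = 1) :
    ∀ᵐ γ ∂μ, ∃ c : 𝕜, f γ = c • ψ := by
  have hψ_ne : ψ ≠ 0 := norm_ne_zero_iff.1 (hψ ▸ one_ne_zero)
  have mem_span : ∀ᵐ γ ∂μ, f γ ∈ Submodule.span 𝕜 {ψ} :=
    (integral_norm_inner_sq_eq_iff_ae_mem_span_singleton hψ_ne
      (integrable_of_integral_eq_one hf_norm) (integrable_of_integral_eq_one hpure)).1
      (by rw [hpure, hψ, hf_norm, one_pow, one_mul])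
  simpa only [Submodule.mem_span_singleton, eq_comm] using mem_span

end CauchySchwarz

/-- Purity of the ensemble density operator forces almost all vectors into a single ray:
if `f : Γ → H` has `∫ ‖f γ‖² dμ = 1` and there is a unit vector `ψ` with
`∫ |⟪ψ, f γ⟫|² dμ = 1`, then for `μ`-almost every `γ` there is `c ∈ ℂ` with `f γ = c • ψ`. -/
theorem pure_ensemble_vectors_in_ray
    {H : Type*} [NormedAddCommGroup H] [InnerProductSpace ℂ H] [CompleteSpace H]
    {Γ : Type*} [MeasurableSpace Γ] (μ : Measure Γ)
    (f : Γ → H) (hf_meas : AEStronglyMeasurable f μ)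
    (hf_int : Integrable (fun γ => ‖f γ‖ ^ 2) μ)
    (hf_norm : ∫ γ, ‖f γ‖ ^ 2 ∂μ = 1)
    (ψ : H) (hψ : ‖ψ‖ = 1)
    (hpure : ∫ γ, ‖⟪ψ, f γ⟫_ℂ‖ ^ 2 ∂μ = 1) :
    ∀ᵐ γ ∂μ, ∃ c : ℂ, f γ = c • ψ :=
  pure_ensemble_vectors_in_ray_general hf_norm hψ hpure
end

section
/- Let H be a complex Hilbert space, (Γ, μ) a measure space, f : Γ → H an almost everywhere strongly measurable function with γ ↦ ‖f γ‖² integrable, and let ψ ∈ H be a unit vector such that for every φ ∈ H, ∫ |⟪φ, f γ⟫|² dμ(γ) = |⟪φ, ψ⟫|². Then for μ-almost every γ there exists c ∈ ℂ such that f γ = c • ψ. -/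
open MeasureTheory
open scoped InnerProductSpace

/-!
The weak second moment `∫ |⟪φ, f γ⟫|² dμ` vanishes for every `φ ⟂ ψ`, so each such `φ` is orthogonal
to `f γ` off a null set depending on `φ`. As `f` is essentially separably valued, countably many
`φ` suffice to detect the component of `f γ` orthogonal to `ψ`, and the null sets can be united.
Only the orthogonal complement of the line through `ψ` matters, so any subspace admitting an
orthogonal projection can replace that line.
-/

section

variable {𝕜 E Γ : Type*} [RCLike 𝕜] [NormedAddCommGroup E] [InnerProductSpace 𝕜 E]
  [MeasurableSpace Γ] {μ : Measure Γ} {f : Γ → E}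

theorem integrable_norm_inner_sq (hf_meas : AEStronglyMeasurable f μ)
    (hf_int : Integrable (fun γ => ‖f γ‖ ^ 2) μ) (φ : E) :
    Integrable (fun γ => ‖⟪φ, f γ⟫_𝕜‖ ^ 2) μ :=
  (((memLp_two_iff_integrable_sq_norm hf_meas).2 hf_int).const_inner φ).norm.integrable_sq

theorem ae_eq_zero_of_integral_norm_sq_eq_zero (hf_int : Integrable (fun γ => ‖f γ‖ ^ 2) μ)
    (hf_zero : ∫ γ, ‖f γ‖ ^ 2 ∂μ = 0) : f =ᵐ[μ] 0 := by
  have h_sq : (fun γ => ‖f γ‖ ^ 2) =ᵐ[μ] 0 :=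
    (integral_eq_zero_iff_of_nonneg (fun γ => sq_nonneg ‖f γ‖) hf_int).1 hf_zero
  filter_upwards [h_sq] with γ hγ
  simpa using hγ

theorem ae_eq_zero_of_forall_ae_inner_eq_zero (hf_meas : AEStronglyMeasurable f μ)
    (h_inner : ∀ φ : E, ∀ᵐ γ ∂μ, ⟪φ, f γ⟫_𝕜 = 0) : f =ᵐ[μ] 0 := by
  obtain ⟨t, ⟨d, hd_countable, ht_closure⟩, hft⟩ := hf_meas.isSeparable_ae_range
  have h_inner_d : ∀ᵐ γ ∂μ, ∀ φ ∈ d, ⟪φ, f γ⟫_𝕜 = 0 :=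
    (ae_ball_iff hd_countable).2 fun φ _ => h_inner φ
  filter_upwards [hft, h_inner_d] with γ hγt hγd
  have h_closed : IsClosed {φ : E | ⟪φ, f γ⟫_𝕜 = 0} :=
    isClosed_eq (by fun_prop) continuous_const
  have h_self : ⟪f γ, f γ⟫_𝕜 = 0 := closure_minimal hγd h_closed (ht_closure hγt)
  exact inner_self_eq_zero.1 h_self

theorem ae_mem_of_forall_mem_orthogonal_ae_inner_eq_zero (K : Submodule 𝕜 E)
    [K.HasOrthogonalProjection] (hf_meas : AEStronglyMeasurable f μ)
    (h_inner : ∀ φ ∈ Kᗮ, ∀ᵐ γ ∂μ, ⟪φ, f γ⟫_𝕜 = 0) : ∀ᵐ γ ∂μ, f γ ∈ K := by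
  have h_proj_zero : (fun γ => Kᗮ.starProjection (f γ)) =ᵐ[μ] 0 := by
    refine ae_eq_zero_of_forall_ae_inner_eq_zero (𝕜 := 𝕜)
      (Kᗮ.starProjection.continuous.comp_aestronglyMeasurable hf_meas) fun φ => ?_
    filter_upwards [h_inner _ (Kᗮ.starProjection_apply_mem φ)] with γ hγ
    rwa [← Submodule.inner_starProjection_left_eq_right]
  filter_upwards [h_proj_zero] with γ hγ
  rwa [Pi.zero_apply, Submodule.starProjection_apply_eq_zero_iff,
    Submodule.orthogonal_orthogonal] at hγ

theorem weakly_pure_ensemble_vectors_in_ray_general (K : Submodule 𝕜 E)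
    [K.HasOrthogonalProjection] (hf_meas : AEStronglyMeasurable f μ)
    (hf_int : ∀ φ ∈ Kᗮ, Integrable (fun γ => ‖⟪φ, f γ⟫_𝕜‖ ^ 2) μ)
    (hf_zero : ∀ φ ∈ Kᗮ, ∫ γ, ‖⟪φ, f γ⟫_𝕜‖ ^ 2 ∂μ = 0) :
    ∀ᵐ γ ∂μ, f γ ∈ K :=
  ae_mem_of_forall_mem_orthogonal_ae_inner_eq_zero K hf_meas fun φ hφ =>
    ae_eq_zero_of_integral_norm_sq_eq_zero (hf_int φ hφ) (hf_zero φ hφ)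

end

/-- If the ensemble density operator `∫ |f γ⟩⟨f γ| dμ` equals, in the weak
(matrix-element) sense, the pure-state projection onto a unit vector `ψ` — i.e.
`∫ |⟪φ, f γ⟫|² dμ = |⟪φ, ψ⟫|²` for every `φ` — then for `μ`-almost every `γ` there is
`c ∈ ℂ` with `f γ = c • ψ`. -/
theorem weakly_pure_ensemble_vectors_in_ray
    {H : Type*} [NormedAddCommGroup H] [InnerProductSpace ℂ H] [CompleteSpace H]
    {Γ : Type*} [MeasurableSpace Γ] (μ : Measure Γ)
    (f : Γ → H) (hf_meas : AEStronglyMeasurable f μ)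
    (hf_int : Integrable (fun γ => ‖f γ‖ ^ 2) μ)
    (ψ : H) (hψ : ‖ψ‖ = 1)
    (hpure : ∀ φ : H, ∫ γ, ‖⟪φ, f γ⟫_ℂ‖ ^ 2 ∂μ = ‖⟪φ, ψ⟫_ℂ‖ ^ 2) :
    ∀ᵐ γ ∂μ, ∃ c : ℂ, f γ = c • ψ := by
  simpa only [Submodule.mem_span_singleton, eq_comm] using
    weakly_pure_ensemble_vectors_in_ray_general (ℂ ∙ ψ) hf_meas
      (fun φ _ => integrable_norm_inner_sq hf_meas hf_int φ)
      (fun φ hφ => by simp [hpure, Submodule.mem_orthogonal_singleton_iff_inner_left.1 hφ])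
end
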